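/- (Remark on restricted sensing classes.) Let X be a real normed vector space, m a natural number, K ⊆ X a subset with K = −K, and 𝒜 a set of linear maps from X to ℝ^m. Define the restricted Gelfand m-width d_𝒜^m(K) := inf_{A ∈ 𝒜} sup_{x ∈ K ∩ ker A} ‖x‖. If Λ is an adaptive measurement scheme of length m whose zero-history matrix A_Λ (the linear map with j-th component λ_j(0,…,0)) belongs to 𝒜, then for every function Δ : ℝ^m → X, d_𝒜^m(K) ≤ sup_{x ∈ K} ‖x − Δ(F_Λ x)‖ (suprema and infima taken in [0,∞]). -/

import Mathlib

/-!
Every `x` in the kernel of the zero-history matrix of `Λ` has measurement vector `0`: if the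
first outcomes vanish, the next functional is the zero-history one, which kills `x`. For `x ∈ K` in
this kernel, `-x` is also in `K` and in the kernel, so the decoder returns the same point `Δ 0` for
both. Since `2x = (x - Δ 0) - (-x - Δ 0)`, one of the two errors is at least `‖x‖`.
-/

open scoped ENNReal Pointwise

/-- An adaptive measurement scheme of length `m` on `X`: the `j`-th linear functional
is selected based on the vector of previous `j` measurement outcomes. -/
def AdaptiveScheme (X : Type*) [NormedAddCommGroup X] [NormedSpace ℝ X] (m : ℕ) :=
  ∀ j : Fin m, ((Fin (j : ℕ)) → ℝ) → (X →ₗ[ℝ] ℝ)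

/-- The measurement map `F_Λ` induced by an adaptive scheme: the `j`-th outcome is obtained
by applying the functional selected from the previous outcomes. -/
noncomputable def AdaptiveScheme.measMap {X : Type*} [NormedAddCommGroup X] [NormedSpace ℝ X]
    {m : ℕ} (Λ : AdaptiveScheme X m) (x : X) : Fin m → ℝ := fun j =>
  Λ j (fun i => Λ.measMap x ⟨i, i.isLt.trans j.isLt⟩) x
termination_by j => (j : ℕ)
decreasing_by exact i.isLt

/-- The Gelfand `m`-width of a subset `K` of `X`. -/
noncomputable def gelfandWidth {X : Type*} [NormedAddCommGroup X] [NormedSpace ℝ X]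
    (m : ℕ) (K : Set X) : ℝ≥0∞ :=
  ⨅ A : X →ₗ[ℝ] (Fin m → ℝ), ⨆ x ∈ K ∩ (LinearMap.ker A : Set X), (‖x‖₊ : ℝ≥0∞)

/-- The (non-adaptive) compressive `m`-width of a subset `K` of `X`. -/
noncomputable def compWidth {X : Type*} [NormedAddCommGroup X] [NormedSpace ℝ X]
    (m : ℕ) (K : Set X) : ℝ≥0∞ :=
  ⨅ (A : X →ₗ[ℝ] (Fin m → ℝ)) (Δ : (Fin m → ℝ) → X), ⨆ x ∈ K, (‖x - Δ (A x)‖₊ : ℝ≥0∞)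

/-- The adaptive compressive `m`-width of a subset `K` of `X`. -/
noncomputable def adaCompWidth {X : Type*} [NormedAddCommGroup X] [NormedSpace ℝ X]
    (m : ℕ) (K : Set X) : ℝ≥0∞ :=
  ⨅ (Λ : AdaptiveScheme X m) (Δ : (Fin m → ℝ) → X),
    ⨆ x ∈ K, (‖x - Δ (Λ.measMap x)‖₊ : ℝ≥0∞)

theorem AdaptiveScheme.measMap_eq_zero {X : Type*} [NormedAddCommGroup X] [NormedSpace ℝ X]
    {m : ℕ} (Λ : AdaptiveScheme X m) {x : X} (hx : ∀ j, Λ j 0 x = 0) : Λ.measMap x = 0 := by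
  have key : ∀ (n : ℕ) (hn : n < m), Λ.measMap x ⟨n, hn⟩ = 0 := by
    intro n
    induction n using Nat.strong_induction_on with
    | _ n ih =>
      intro hn
      rw [AdaptiveScheme.measMap]
      have h0 : (fun i : Fin n => Λ.measMap x ⟨i, i.isLt.trans hn⟩) = 0 :=
        funext fun i => ih i i.isLt _
      exact (congrArg (fun v => Λ ⟨n, hn⟩ v x) h0).trans (hx _)
  exact funext fun j => key j j.isLt

theorem norm_le_norm_sub_or_norm_neg_sub {X : Type*} [NormedAddCommGroup X] [NormedSpace ℝ X]
    (x d : X) : ‖x‖ ≤ ‖x - d‖ ∨ ‖x‖ ≤ ‖-x - d‖ := by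
  by_contra! h
  have h1 : ‖(2 : ℝ) • x‖ = 2 * ‖x‖ := by simp [norm_smul]
  have h2 : (2 : ℝ) • x = (x - d) - (-x - d) := by rw [two_smul]; abel
  have h3 := norm_sub_le (x - d) (-x - d)
  rw [← h2, h1] at h3
  linarith [h.1, h.2]

/-- Remark on restricted sensing classes: if the zero-history matrix of an adaptive scheme `Λ`
belongs to a class `𝒜` of linear maps, then the Gelfand `m`-width restricted to `𝒜`
lower-bounds the worst-case error of `Λ` with any recovery map, for symmetric `K`. -/
theorem restricted_gelfandWidth_le_adaptive_error
    {X : Type*} [NormedAddCommGroup X] [NormedSpace ℝ X] {m : ℕ}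
    (K : Set X) (hK : K = -K) (𝒜 : Set (X →ₗ[ℝ] (Fin m → ℝ)))
    (Λ : AdaptiveScheme X m)
    (hΛ : (LinearMap.pi fun j => Λ j 0) ∈ 𝒜)
    (Δ : (Fin m → ℝ) → X) :
    (⨅ A ∈ 𝒜, ⨆ x ∈ K ∩ (LinearMap.ker A : Set X), (‖x‖₊ : ℝ≥0∞)) ≤
      ⨆ x ∈ K, (‖x - Δ (Λ.measMap x)‖₊ : ℝ≥0∞) := by
  refine (iInf₂_le _ hΛ).trans (iSup₂_le ?_)
  rintro x ⟨hxK, hxA⟩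
  have hx : ∀ j, Λ j 0 x = 0 := fun j => congrFun (LinearMap.mem_ker.1 hxA) j
  have hnegK : -x ∈ K := by rw [hK]; simpa using hxK
  have hF : Λ.measMap x = 0 := Λ.measMap_eq_zero hx
  have hFneg : Λ.measMap (-x) = 0 := Λ.measMap_eq_zero fun j => by rw [map_neg, hx, neg_zero]
  rcases norm_le_norm_sub_or_norm_neg_sub x (Δ 0) with h | h
  · refine le_iSup₂_of_le x hxK ?_
    rw [hF]
    exact ENNReal.coe_le_coe.2 h
  · refine le_iSup₂_of_le (-x) hnegK ?_
    rw [hFneg]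
    exact ENNReal.coe_le_coe.2 h
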